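/- Fix c > 0 and an integer N ≥ 2. Let M*(c,N) = E[m*(c,N)], and let γ*(c,N) denote the expectation of the maximum matching size with threshold c/N when the numbers of points on the two sides are independent Poisson random variables K and K' of mean N and, conditionally on (K, K'), the points X₁, …, X_K and Y₁, …, Y_{K'} are independent and uniformly distributed on [0,1]. Then |γ*(c,N) − M*(c,N)| ≤ 4·(1 + √(N·log N)). -/

import Mathlib

open MeasureTheory

/-- The maximum matching size between the points `X 0, …, X (k-1)` and
`Y 0, …, Y (k'-1)` with threshold `r`. -/
noncomputable def mmSize (r : ℝ) {k k' : ℕ} (X : Fin k → ℝ) (Y : Fin k' → ℝ) : ℕ :=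
  sSup {j : ℕ | ∃ σ : Fin j → Fin k, ∃ τ : Fin j → Fin k',
    Function.Injective σ ∧ Function.Injective τ ∧ ∀ i, |X (σ i) - Y (τ i)| < r}

/-- The product of `k` copies of the uniform distribution on `[0,1]`. -/
noncomputable def unifCube (k : ℕ) : Measure (Fin k → ℝ) :=
  Measure.pi fun _ => volume.restrict (Set.Icc 0 1)

/-- `M*(c,N)`: the expectation of the maximum matching size with threshold `c/N`
between `N` i.i.d. uniform points on each side. -/
noncomputable def MStar (c : ℝ) (N : ℕ) : ℝ :=
  ∫ ω, (mmSize (c / N) ω.1 ω.2 : ℝ) ∂((unifCube N).prod (unifCube N))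

/-- `γ*(c,N)`: the expectation of the maximum matching size with threshold `c/N`
when the numbers of points on the two sides are independent Poisson random
variables of mean `N` and, conditionally on them, the points are i.i.d. uniform
on `[0,1]`. -/
noncomputable def gammaStar (c : ℝ) (N : ℕ) : ℝ :=
  ∑' k : ℕ, ∑' k' : ℕ,
    ProbabilityTheory.poissonPMFReal N k * ProbabilityTheory.poissonPMFReal N k' *
      ∫ ω : (Fin k → ℝ) × (Fin k' → ℝ),
        (mmSize (c / N) ω.1 ω.2 : ℝ) ∂((unifCube k).prod (unifCube k'))

/-! Deleting one point changes the maximum matching size by at most one, so the expected matching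
size is `1`-Lipschitz in each of the two numbers of points. Replacing these numbers by independent
Poisson variables of means `m` and `n` therefore moves the expectation by at most the mean absolute
deviations of the two variables, which Cauchy–Schwarz bounds by their standard deviations `√m`
and `√n`. For `m = n = N` this gives `2 √N`, and `√N ≤ 1 + √(N log N)` because
`N ≤ 1 + N log N`. -/

open ProbabilityTheory
open scoped NNReal Nat

section MatchingSize

variable {r : ℝ} {j k l : ℕ}

/-- The points `X` and `Y` admit a matching of size `j` with threshold `r`: the `i`-th matched pair
is `(X (σ i), Y (τ i))`. The maximum matching size `mmSize r X Y` is the supremum of such `j`. -/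
def HasMatching (r : ℝ) (X : Fin k → ℝ) (Y : Fin l → ℝ) (j : ℕ) : Prop :=
  ∃ σ : Fin j → Fin k, ∃ τ : Fin j → Fin l,
    Function.Injective σ ∧ Function.Injective τ ∧ ∀ i, |X (σ i) - Y (τ i)| < r

lemma hasMatching_zero (r : ℝ) (X : Fin k → ℝ) (Y : Fin l → ℝ) : HasMatching r X Y 0 :=
  ⟨Fin.elim0, Fin.elim0, fun i => i.elim0, fun i => i.elim0, fun i => i.elim0⟩

namespace HasMatching

variable {X : Fin k → ℝ} {Y : Fin l → ℝ}

lemma le_card_left (h : HasMatching r X Y j) : j ≤ k := by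
  obtain ⟨σ, -, hσ, -⟩ := h
  simpa only [Fintype.card_fin] using Fintype.card_le_of_injective σ hσ

lemma mono {i : ℕ} (h : HasMatching r X Y j) (hij : i ≤ j) : HasMatching r X Y i := by
  obtain ⟨σ, τ, hσ, hτ, hr⟩ := h
  have hinj := Fin.castLE_injective hij
  exact ⟨σ ∘ Fin.castLE hij, τ ∘ Fin.castLE hij, hσ.comp hinj, hτ.comp hinj, fun i => hr _⟩

lemma symm (h : HasMatching r X Y j) : HasMatching r Y X j := by
  obtain ⟨σ, τ, hσ, hτ, hr⟩ := h
  exact ⟨τ, σ, hτ, hσ, fun i => abs_sub_comm (X (σ i)) _ ▸ hr i⟩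

lemma of_tail {X : Fin (k + 1) → ℝ} (h : HasMatching r (Fin.tail X) Y j) :
    HasMatching r X Y j := by
  obtain ⟨σ, τ, hσ, hτ, hr⟩ := h
  exact ⟨Fin.succ ∘ σ, τ, (Fin.succ_injective k).comp hσ, hτ, hr⟩

end HasMatching

lemma exists_forall_succAbove_ne {α : Type*} {σ : Fin (j + 1) → α} (hσ : Function.Injective σ)
    (a : α) : ∃ p : Fin (j + 1), ∀ i, σ (p.succAbove i) ≠ a := by
  by_cases ha : ∃ p, σ p = a
  · obtain ⟨p, rfl⟩ := ha
    exact ⟨p, fun i => hσ.ne (p.succAbove_ne i)⟩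
  · exact ⟨0, fun i hi => ha ⟨_, hi⟩⟩

lemma HasMatching.tail {X : Fin (k + 1) → ℝ} {Y : Fin l → ℝ} (h : HasMatching r X Y (j + 1)) :
    HasMatching r (Fin.tail X) Y j := by
  obtain ⟨σ, τ, hσ, hτ, hr⟩ := h
  obtain ⟨p, hp⟩ := exists_forall_succAbove_ne hσ 0
  refine ⟨fun i => (σ (p.succAbove i)).pred (hp i), τ ∘ p.succAbove, ?_,
    hτ.comp Fin.succAbove_right_injective, fun i => ?_⟩
  · exact fun a b hab => Fin.succAbove_right_injective (hσ (Fin.pred_inj.1 hab))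
  · simpa only [Fin.tail, Fin.succ_pred, Function.comp_apply] using hr (p.succAbove i)

lemma le_mmSize_iff {X : Fin k → ℝ} {Y : Fin l → ℝ} : j ≤ mmSize r X Y ↔ HasMatching r X Y j := by
  have hbdd : BddAbove {j | HasMatching r X Y j} := ⟨k, fun _ h => h.le_card_left⟩
  have hmax : HasMatching r X Y (mmSize r X Y) := Nat.sSup_mem ⟨0, hasMatching_zero r X Y⟩ hbdd
  exact ⟨hmax.mono, fun h => le_csSup hbdd h⟩

lemma hasMatching_mmSize (r : ℝ) (X : Fin k → ℝ) (Y : Fin l → ℝ) :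
    HasMatching r X Y (mmSize r X Y) :=
  le_mmSize_iff.1 le_rfl

lemma mmSize_le_card_left (r : ℝ) (X : Fin k → ℝ) (Y : Fin l → ℝ) : mmSize r X Y ≤ k :=
  (hasMatching_mmSize r X Y).le_card_left

lemma mmSize_comm (r : ℝ) (X : Fin k → ℝ) (Y : Fin l → ℝ) : mmSize r X Y = mmSize r Y X :=
  eq_of_forall_le_iff fun _ => by
    simp only [le_mmSize_iff]
    exact ⟨HasMatching.symm, HasMatching.symm⟩

lemma mmSize_tail_le (r : ℝ) (X : Fin (k + 1) → ℝ) (Y : Fin l → ℝ) :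
    mmSize r (Fin.tail X) Y ≤ mmSize r X Y :=
  le_mmSize_iff.2 (hasMatching_mmSize r (Fin.tail X) Y).of_tail

lemma mmSize_le_mmSize_tail_add_one (r : ℝ) (X : Fin (k + 1) → ℝ) (Y : Fin l → ℝ) :
    mmSize r X Y ≤ mmSize r (Fin.tail X) Y + 1 := by
  rcases hm : mmSize r X Y with _ | j
  · exact Nat.zero_le _
  · have hX : HasMatching r X Y (j + 1) := hm ▸ hasMatching_mmSize r X Y
    exact Nat.succ_le_succ (le_mmSize_iff.2 hX.tail)

lemma dist_mmSize_tail_le_one (r : ℝ) (X : Fin (k + 1) → ℝ) (Y : Fin l → ℝ) :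
    dist (mmSize r (Fin.tail X) Y : ℝ) (mmSize r X Y) ≤ 1 := by
  have hlow : (mmSize r (Fin.tail X) Y : ℝ) ≤ mmSize r X Y :=
    mod_cast mmSize_tail_le r X Y
  have hupp : (mmSize r X Y : ℝ) ≤ mmSize r (Fin.tail X) Y + 1 :=
    mod_cast mmSize_le_mmSize_tail_add_one r X Y
  rw [Real.dist_eq, abs_le]
  constructor <;> linarith

lemma measurable_mmSize (r : ℝ) (k l : ℕ) :
    Measurable fun ω : (Fin k → ℝ) × (Fin l → ℝ) => mmSize r ω.1 ω.2 := by
  refine measurable_of_Ici fun j => ?_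
  simp only [Set.preimage, Set.mem_Ici, le_mmSize_iff, HasMatching]
  refine Measurable.setOf <| .exists fun σ => .exists fun τ => .and measurable_const <|
    .and measurable_const <| .forall fun i => Measurable.lt ?_ measurable_const
  fun_prop

end MatchingSize

section ExpectedMatching

/-- The expected maximum matching size with threshold `r` between `k` independent points of law `μ`
and `l` independent points of law `ν`. Taking both laws uniform on `[0,1]` and `k = l = N` gives
`MStar`. -/
noncomputable def expMatching (μ ν : Measure ℝ) (r : ℝ) (k l : ℕ) : ℝ :=
  ∫ ω : (Fin k → ℝ) × (Fin l → ℝ), (mmSize r ω.1 ω.2 : ℝ)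
    ∂((Measure.pi fun _ => μ).prod (Measure.pi fun _ => ν))

lemma measurePreserving_finTail {k : ℕ} {α : Fin (k + 1) → Type*} [∀ i, MeasurableSpace (α i)]
    (μ : ∀ i, Measure (α i)) [∀ i, SigmaFinite (μ i)] [IsProbabilityMeasure (μ 0)] :
    MeasurePreserving Fin.tail (Measure.pi μ) (Measure.pi fun i => μ i.succ) :=
  measurePreserving_snd.comp (measurePreserving_piFinSuccAbove μ 0)

lemma lipschitzWith_of_dist_succ_le {α : Type*} [PseudoMetricSpace α] {f : ℕ → α} {K : ℝ≥0}
    (h : ∀ n, dist (f n) (f (n + 1)) ≤ K) : LipschitzWith K f := by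
  have hle {m n : ℕ} (hmn : m ≤ n) : dist (f m) (f n) ≤ K * dist m n := calc
    dist (f m) (f n) ≤ ∑ _i ∈ Finset.Ico m n, (K : ℝ) :=
      dist_le_Ico_sum_of_dist_le hmn fun _ _ => h _
    _ = K * dist m n := by
      rw [Finset.sum_const, Nat.card_Ico, nsmul_eq_mul, Nat.cast_sub hmn, mul_comm, dist_comm,
        Nat.dist_eq, abs_of_nonneg (sub_nonneg.2 (Nat.cast_le.2 hmn))]
  refine LipschitzWith.of_dist_le_mul fun m n => ?_
  rcases le_total m n with hmn | hnm
  · exact hle hmn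
  · simpa only [dist_comm] using hle hnm

variable (μ ν : Measure ℝ) (r : ℝ)

lemma integrable_mmSize [IsFiniteMeasure μ] [IsFiniteMeasure ν] (k l : ℕ) :
    Integrable (fun ω : (Fin k → ℝ) × (Fin l → ℝ) => (mmSize r ω.1 ω.2 : ℝ))
      ((Measure.pi fun _ => μ).prod (Measure.pi fun _ => ν)) := by
  refine .of_bound (C := k) ?_ (.of_forall fun ω => ?_)
  · exact (measurable_from_top.comp (measurable_mmSize r k l)).aestronglyMeasurable
  · rw [Real.norm_natCast]
    exact mod_cast mmSize_le_card_left r ω.1 ω.2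

lemma expMatching_comm [SigmaFinite μ] [SigmaFinite ν] (k l : ℕ) :
    expMatching μ ν r k l = expMatching ν μ r l k := by
  rw [expMatching, ← integral_prod_swap]
  simp only [Prod.fst_swap, Prod.snd_swap, mmSize_comm r _ (Prod.fst _), expMatching]

variable [IsProbabilityMeasure μ] [IsProbabilityMeasure ν]

lemma dist_expMatching_succ_left_le_one (k l : ℕ) :
    dist (expMatching μ ν r k l) (expMatching μ ν r (k + 1) l) ≤ 1 := by
  let ρ (k : ℕ) := (Measure.pi fun _ : Fin k => μ).prod (Measure.pi fun _ : Fin l => ν)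
  have htail : MeasurePreserving (Prod.map Fin.tail id) (ρ (k + 1)) (ρ k) :=
    (measurePreserving_finTail fun _ => μ).prod (.id _)
  have hint := integrable_mmSize μ ν r k l
  have hk : expMatching μ ν r k l = ∫ ω, (mmSize r (Fin.tail ω.1) ω.2 : ℝ) ∂ρ (k + 1) := by
    change ∫ ω, (mmSize r ω.1 ω.2 : ℝ) ∂ρ k = _
    rw [← htail.map_eq, integral_map htail.aemeasurable (htail.map_eq.symm ▸ hint.1)]
    rfl
  have hint_tail : Integrable (fun ω => (mmSize r (Fin.tail ω.1) ω.2 : ℝ)) (ρ (k + 1)) :=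
    htail.integrable_comp_of_integrable hint
  rw [hk, expMatching, dist_eq_norm, ← integral_sub hint_tail (integrable_mmSize μ ν r (k + 1) l)]
  simpa only [probReal_univ, mul_one] using norm_integral_le_of_norm_le_const (μ := ρ (k + 1))
    (.of_forall fun ω => dist_mmSize_tail_le_one r ω.1 ω.2)

lemma lipschitzWith_expMatching_left (l : ℕ) :
    LipschitzWith 1 fun k => expMatching μ ν r k l :=
  lipschitzWith_of_dist_succ_le fun k => dist_expMatching_succ_left_le_one μ ν r k l

lemma lipschitzWith_expMatching_right (k : ℕ) : LipschitzWith 1 fun l => expMatching μ ν r k l := by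
  simpa only [expMatching_comm μ ν] using lipschitzWith_expMatching_left ν μ r k

lemma dist_expMatching_le (k l m n : ℕ) :
    dist (expMatching μ ν r k l) (expMatching μ ν r m n) ≤ dist k m + dist l n := calc
  _ ≤ dist (expMatching μ ν r k l) (expMatching μ ν r m l)
      + dist (expMatching μ ν r m l) (expMatching μ ν r m n) := dist_triangle _ _ _
  _ ≤ dist k m + dist l n := by
    gcongr
    · simpa using (lipschitzWith_expMatching_left μ ν r l).dist_le_mul k m
    · simpa using (lipschitzWith_expMatching_right μ ν r m).dist_le_mul l n

end ExpectedMatching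

section Deviation

variable {Ω : Type*} [MeasurableSpace Ω] {P : Measure Ω} [IsProbabilityMeasure P] {Z : Ω → ℝ}

lemma integral_abs_sub_integral_le_sqrt_variance (hZ : MemLp Z 2 P) :
    ∫ ω, |Z ω - P[Z]| ∂P ≤ √Var[Z; P] := by
  have hdev : MemLp (fun ω => |Z ω - P[Z]|) 2 P := (hZ.sub (memLp_const _)).norm
  have hvar := variance_nonneg (fun ω => |Z ω - P[Z]|) P
  rw [variance_eq_sub hdev] at hvar
  refine Real.le_sqrt_of_sq_le ?_
  rw [variance_eq_integral hZ.aemeasurable]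
  simpa only [Pi.pow_apply, sq_abs, sub_nonneg] using hvar

lemma norm_integral_sub_le_sqrt_variance_add {E : Type*} [NormedAddCommGroup E] [NormedSpace ℝ E]
    [CompleteSpace E] {g : Ω → E} {a : E} {b : ℝ} (hZ : MemLp Z 2 P)
    (hg : AEStronglyMeasurable g P) (h : ∀ᵐ ω ∂P, ‖g ω - a‖ ≤ |Z ω - P[Z]| + b) :
    ‖∫ ω, g ω ∂P - a‖ ≤ √Var[Z; P] + b := by
  have hdev : Integrable (fun ω => |Z ω - P[Z]|) P :=
    ((hZ.integrable one_le_two).sub (integrable_const _)).abs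
  have hbound : Integrable (fun ω => |Z ω - P[Z]| + b) P := hdev.add (integrable_const b)
  have hsub : Integrable (fun ω => g ω - a) P :=
    hbound.mono' (hg.sub aestronglyMeasurable_const) h
  have hg_int : Integrable g P := by
    simpa only [Pi.add_def, sub_add_cancel] using hsub.add (integrable_const a)
  calc ‖∫ ω, g ω ∂P - a‖ = ‖∫ ω, (g ω - a) ∂P‖ := by
        rw [integral_sub hg_int (integrable_const a), integral_const, probReal_univ, one_smul]
    _ ≤ ∫ ω, (|Z ω - P[Z]| + b) ∂P := norm_integral_le_of_norm_le hbound h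
    _ = ∫ ω, |Z ω - P[Z]| ∂P + b := by
        rw [integral_add hdev (integrable_const b), integral_const, probReal_univ, one_smul]
    _ ≤ √Var[Z; P] + b := by gcongr; exact integral_abs_sub_integral_le_sqrt_variance hZ

end Deviation

section PoissonMoments

variable (r : ℝ≥0)

lemma hasSum_poisson_mul_descFactorial (j : ℕ) :
    HasSum (fun k : ℕ => Real.exp (-r) * r ^ k / k ! * k.descFactorial j) ((r : ℝ) ^ j) := by
  have hlow : ∑ k ∈ Finset.range j, Real.exp (-r) * r ^ k / k ! * (k.descFactorial j : ℝ) = 0 :=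
    Finset.sum_eq_zero fun k hk => by
      rw [Nat.descFactorial_of_lt (Finset.mem_range.1 hk), Nat.cast_zero, mul_zero]
  rw [← hasSum_nat_add_iff' j, hlow, sub_zero, ← mul_one ((r : ℝ) ^ j)]
  refine ((hasSum_one_poissonMeasure r).mul_left ((r : ℝ) ^ j)).congr_fun fun k => ?_
  have hfact : (k ! : ℝ) * (k + j).descFactorial j = (k + j)! := by
    simpa using congrArg (Nat.cast (R := ℝ)) (Nat.factorial_mul_descFactorial (Nat.le_add_left j k))
  have hk : (k ! : ℝ) ≠ 0 := mod_cast k.factorial_ne_zero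
  have hkj : ((k + j)! : ℝ) ≠ 0 := mod_cast (k + j).factorial_ne_zero
  field_simp
  rw [← hfact]
  ring

lemma integrable_descFactorial_poissonMeasure (j : ℕ) :
    Integrable (fun k : ℕ => (k.descFactorial j : ℝ)) Po(r) := by
  simpa only [integrable_poissonMeasure_iff, Real.norm_natCast] using
    (hasSum_poisson_mul_descFactorial r j).summable

lemma integral_descFactorial_poissonMeasure (j : ℕ) :
    ∫ k : ℕ, (k.descFactorial j : ℝ) ∂Po(r) = r ^ j := by
  simpa only [integral_poissonMeasure, smul_eq_mul] using
    (hasSum_poisson_mul_descFactorial r j).tsum_eq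

lemma natCast_sq_eq_descFactorial_add (k : ℕ) :
    (k : ℝ) ^ 2 = k.descFactorial 2 + k.descFactorial 1 := by
  rw [Nat.cast_descFactorial_two, Nat.descFactorial_one]
  ring

lemma memLp_two_natCast_poissonMeasure : MemLp (Nat.cast : ℕ → ℝ) 2 Po(r) := by
  rw [memLp_two_iff_integrable_sq .of_discrete]
  simp only [natCast_sq_eq_descFactorial_add]
  exact (integrable_descFactorial_poissonMeasure r 2).add
    (integrable_descFactorial_poissonMeasure r 1)

lemma integral_natCast_poissonMeasure : ∫ k : ℕ, (k : ℝ) ∂Po(r) = r := by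
  simpa only [Nat.descFactorial_one, pow_one] using integral_descFactorial_poissonMeasure r 1

lemma variance_natCast_poissonMeasure : Var[(Nat.cast : ℕ → ℝ); Po(r)] = r := by
  have hsq : ∫ k : ℕ, (k : ℝ) ^ 2 ∂Po(r) = (r : ℝ) ^ 2 + (r : ℝ) ^ 1 := by
    simp only [natCast_sq_eq_descFactorial_add]
    rw [integral_add (integrable_descFactorial_poissonMeasure r 2)
      (integrable_descFactorial_poissonMeasure r 1)]
    simp only [integral_descFactorial_poissonMeasure]
  rw [variance_eq_sub (memLp_two_natCast_poissonMeasure r), integral_natCast_poissonMeasure]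
  simp only [Pi.pow_apply, hsq]
  ring

variable {r} in
lemma norm_integral_poissonMeasure_sub_le {E : Type*} [NormedAddCommGroup E] [NormedSpace ℝ E]
    [CompleteSpace E] {g : ℕ → E} {a : E} {b : ℝ}
    (h : ∀ k : ℕ, ‖g k - a‖ ≤ |(k : ℝ) - r| + b) :
    ‖∫ k, g k ∂Po(r) - a‖ ≤ √r + b := by
  have hdev := norm_integral_sub_le_sqrt_variance_add (g := g) (a := a) (b := b)
    (memLp_two_natCast_poissonMeasure r) .of_discrete
    (.of_forall fun k => by simpa only [integral_natCast_poissonMeasure] using h k)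
  rwa [variance_natCast_poissonMeasure] at hdev

end PoissonMoments

instance isProbabilityMeasure_restrict_Icc_zero_one :
    IsProbabilityMeasure ((volume : Measure ℝ).restrict (Set.Icc 0 1)) :=
  ⟨by simp⟩

lemma MStar_eq_expMatching (c : ℝ) (N : ℕ) :
    MStar c N = expMatching (volume.restrict (Set.Icc 0 1)) (volume.restrict (Set.Icc 0 1))
      (c / N) N N :=
  rfl

lemma gammaStar_eq_integral_expMatching (c : ℝ) (N : ℕ) :
    gammaStar c N = ∫ k, ∫ l, expMatching (volume.restrict (Set.Icc 0 1))
      (volume.restrict (Set.Icc 0 1)) (c / N) k l ∂Po(N) ∂Po(N) := by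
  simp only [gammaStar, mul_assoc, tsum_mul_left, integral_poissonMeasure]
  rfl

lemma sqrt_le_one_add_sqrt_mul_log {x : ℝ} (hx : 0 ≤ x) : √x ≤ 1 + √(x * Real.log x) := by
  have hlog : x ≤ 1 + x * Real.log x := sub_le_iff_le_add'.1 (Real.self_sub_one_le_mul_log hx)
  have hsq : x * Real.log x ≤ √(x * Real.log x) ^ 2 := (Real.sqrt_le_iff.1 le_rfl).2
  refine Real.sqrt_le_iff.2 ⟨by positivity, ?_⟩
  nlinarith [Real.sqrt_nonneg (x * Real.log x)]

theorem stmt5_general (μ ν : Measure ℝ) [IsProbabilityMeasure μ] [IsProbabilityMeasure ν] (r : ℝ)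
    (m n : ℕ) :
    |∫ k, ∫ l, expMatching μ ν r k l ∂Po(n) ∂Po(m) - expMatching μ ν r m n| ≤ √m + √n := by
  have hinner (k : ℕ) : ‖∫ l, expMatching μ ν r k l ∂Po(n) - expMatching μ ν r m n‖
      ≤ √n + |(k : ℝ) - m| :=
    norm_integral_poissonMeasure_sub_le fun l =>
      (dist_expMatching_le μ ν r k l m n).trans_eq (add_comm _ _)
  exact norm_integral_poissonMeasure_sub_le fun k => (hinner k).trans_eq (add_comm _ _)

/-- `|γ*(c,N) − M*(c,N)| ≤ 4(1 + √(N log N))`. -/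
theorem stmt5 (c : ℝ) (hc : 0 < c) (N : ℕ) (hN : 2 ≤ N) :
    |gammaStar c N - MStar c N| ≤ 4 * (1 + Real.sqrt (N * Real.log N)) := by
  rw [gammaStar_eq_integral_expMatching, MStar_eq_expMatching]
  refine (stmt5_general _ _ _ N N).trans ?_
  linarith [sqrt_le_one_add_sqrt_mul_log N.cast_nonneg, Real.sqrt_nonneg (N * Real.log N)]
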